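/- For all nonnegative integers a, b, c: if (a − c)² + (b − c)² = a, then a ≤ 2c + 1 and c ≤ a + b. -/

import Mathlib

/-!
Each of the two squares is at most `a`. The first one is bounded below by
`2 * (a - c) ≤ (a - c) ^ 2 + 1`, which gives `a ≤ 2 * c + 1`; the second by
`c - b ≤ (c - b) ^ 2`, valid because `c - b` is an integer, which gives `c ≤ a + b`.
-/

theorem le_two_mul_add_one_of_sub_sq_le {R : Type*} [CommRing R] [LinearOrder R]
    [IsStrictOrderedRing R] {a c : R} (h : (a - c) ^ 2 ≤ a) : a ≤ 2 * c + 1 := by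
  have two_mul_sub_le : 2 * (a - c) ≤ a + 1 :=
    calc 2 * (a - c) = 2 * (a - c) * 1 := (mul_one _).symm
      _ ≤ (a - c) ^ 2 + 1 ^ 2 := two_mul_le_add_sq (a - c) 1
      _ ≤ a + 1 := by rw [one_pow]; gcongr
  linarith

theorem le_add_of_sub_sq_le {a b c : ℤ} (h : (b - c) ^ 2 ≤ a) : c ≤ a + b :=
  sub_le_iff_le_add.mp <|
    calc c - b ≤ (c - b) ^ 2 := Int.le_self_sq (c - b)
      _ = (b - c) ^ 2 := sub_sq_comm c b
      _ ≤ a := h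

theorem vieta_lemma_mu1_general (a b c : ℤ) (h : (a - c) ^ 2 + (b - c) ^ 2 ≤ a) :
    a ≤ 2 * c + 1 ∧ c ≤ a + b :=
  ⟨le_two_mul_add_one_of_sub_sq_le (le_of_add_le_of_nonneg_left h (sq_nonneg (b - c))),
    le_add_of_sub_sq_le (le_of_add_le_of_nonneg_right h (sq_nonneg (a - c)))⟩

/-- Quadratic Diophantine lemma (Vieta): for nonnegative integers `a, b, c`, if
`(a − c)² + (b − c)² = a` then `a ≤ 2c + 1` and `c ≤ a + b`. -/
theorem vieta_lemma_mu1 (a b c : ℕ)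
    (h : ((a : ℤ) - c) ^ 2 + ((b : ℤ) - c) ^ 2 = a) :
    a ≤ 2 * c + 1 ∧ c ≤ a + b := by
  exact_mod_cast vieta_lemma_mu1_general a b c h.le
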